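/- Let d ≥ 1, let α ∈ [1, 2], and let y_1,…,y_T ∈ {1,…,d}. Let c_{j,T} = #{s ≤ T : y_s = j}, let p_{T+1} ∈ Δ_d have coordinates (p_{T+1})_j = (c_{j,T} + 1)/(T + d) (the FTRL point with η = 1), and let p̄_T = (1/T) Σ_{t=1}^T e_{y_t}. Then the smoothing term satisfies Σ_{t=1}^T ( ℓ_α(p_{T+1}, y_t) − ℓ_α(p̄_T, y_t) ) ≤ 3 α d. -/

import Mathlib

open scoped BigOperators

/-- The unscaled α-Tsallis loss: for `α ∈ (1, 2]`,
`ℓ_α(p, y) = (1/(1−α))(α p_y^{α−1} − 1) + ∑_j p_j^α`, and for `α = 1` it is the log loss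
`ℓ_1(p, y) = −log p_y`. -/
noncomputable def tsallisLoss {d : ℕ} (α : ℝ) (p : Fin d → ℝ) (y : Fin d) : ℝ :=
  if α = 1 then -Real.log (p y)
  else (1 / (1 - α)) * (α * p y ^ (α - 1) - 1) + ∑ j, p j ^ α

/-!
Grouping the rounds by outcome, the smoothing term is `T` times the excess risk of the smoothed
distribution `p` under the empirical distribution `q`. The Tsallis loss is proper, so this excess
risk is a Bregman divergence, and Bernoulli's inequality bounds it by a multiple of
`χ²(q ‖ p) = ∑ q_j² / p_j - 1`. Adding `lam` to every count makes `p` a mixture of `q` and the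
uniform distribution with `q ≤ (1 + lam * d / T) p`, so that `χ²(q ‖ p) ≤ lam * d / T`.
-/

section Scalar

variable {α β p q : ℝ}

theorem mul_rpow_le_tangent (hβ₀ : 0 ≤ β) (hβ₁ : β ≤ 1) (hp : 0 < p) (hq : 0 ≤ q) :
    p * q ^ β ≤ p ^ β * (p + β * (q - p)) := by
  have bernoulli : (q / p) ^ β ≤ 1 + β * (q / p - 1) := by
    simpa only [add_sub_cancel] using
      rpow_one_add_le_one_add_mul_self (s := q / p - 1) (by linarith [div_nonneg hq hp.le]) hβ₀ hβ₁
  calc p * q ^ β = p * p ^ β * (q / p) ^ β := by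
        rw [mul_assoc, ← Real.mul_rpow hp.le (div_nonneg hq hp.le), mul_div_cancel₀ q hp.ne']
    _ ≤ p * p ^ β * (1 + β * (q / p - 1)) := by gcongr
    _ = p ^ β * (p + β * (q - p)) := by field_simp

theorem tangent_le_mul_rpow (hβ : 1 ≤ β) (hp : 0 ≤ p) (hq : 0 ≤ q) :
    p ^ β * (p + β * (q - p)) ≤ p * q ^ β := by
  rcases hp.eq_or_lt with rfl | hp
  · simp [Real.zero_rpow (show β ≠ 0 by linarith)]
  have bernoulli : 1 + β * (q / p - 1) ≤ (q / p) ^ β := by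
    simpa only [add_sub_cancel] using
      one_add_mul_self_le_rpow_one_add (s := q / p - 1) (by linarith [div_nonneg hq hp.le]) hβ
  calc p ^ β * (p + β * (q - p)) = p * p ^ β * (1 + β * (q / p - 1)) := by field_simp
    _ ≤ p * p ^ β * (q / p) ^ β := by gcongr
    _ = p * q ^ β := by
        rw [mul_assoc, ← Real.mul_rpow hp.le (div_nonneg hq hp.le), mul_div_cancel₀ q hp.ne']

theorem rpow_sub_rpow_le_mul_sub (hβ : 1 ≤ β) (hp : 0 ≤ p) (hpq : p ≤ q) (hq : q ≤ 1) :
    q ^ β - p ^ β ≤ β * (q - p) := by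
  rcases (hp.trans hpq).eq_or_lt with rfl | hq₀
  · simp [le_antisymm hpq hp]
  have tangent := tangent_le_mul_rpow hβ hq₀.le hp
  have rpow_le : q ^ β ≤ q := Real.rpow_le_self_of_le_one hq₀.le hq hβ
  have : 0 ≤ β * (q - p) := mul_nonneg (by linarith) (sub_nonneg.2 hpq)
  refine le_of_mul_le_mul_left ?_ hq₀
  calc q * (q ^ β - p ^ β) ≤ q ^ β * (β * (q - p)) := by linarith
    _ ≤ q * (β * (q - p)) := by gcongr

theorem sub_mul_rpow_sub_rpow_le (hβ : 1 ≤ β) (hp : p ∈ Set.Icc 0 1) (hq : q ∈ Set.Icc 0 1) :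
    (q - p) * (q ^ β - p ^ β) ≤ β * (q - p) ^ 2 := by
  wlog hpq : p ≤ q generalizing p q
  · linarith [this hq hp (le_of_not_ge hpq)]
  calc (q - p) * (q ^ β - p ^ β) ≤ (q - p) * (β * (q - p)) :=
        mul_le_mul_of_nonneg_left (rpow_sub_rpow_le_mul_sub hβ hp.1 hpq hq.2) (sub_nonneg.2 hpq)
    _ = β * (q - p) ^ 2 := by ring

/-- The Bregman divergence `D(q, p)` of the negative Tsallis entropy `x ↦ x ^ α / (α - 1)`,
written out for nonnegative reals and `α > 1`. It is one coordinate of the excess risk of the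
Tsallis loss. -/
noncomputable def tsallisBregman (α q p : ℝ) : ℝ :=
  (q ^ α - α * q * p ^ (α - 1) + (α - 1) * p ^ α) / (α - 1)

theorem rpow_eq_mul_rpow_sub_one (hα : α ≠ 0) (hp : 0 ≤ p) : p ^ α = p * p ^ (α - 1) := by
  rw [← Real.rpow_one_add' hp (by simpa), add_sub_cancel]

theorem tsallisBregman_le_of_le_two (hα₁ : 1 < α) (hα₂ : α ≤ 2) (hp : 0 < p) (hq : 0 ≤ q) :
    tsallisBregman α q p ≤ p ^ (α - 1) * ((q - p) ^ 2 / p) := by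
  have hα₀ : α ≠ 0 := by linarith
  have tangent := mul_le_mul_of_nonneg_left
    (mul_rpow_le_tangent (β := α - 1) (by linarith) (by linarith) hp hq) hq
  rw [tsallisBregman, rpow_eq_mul_rpow_sub_one hα₀ hq, rpow_eq_mul_rpow_sub_one hα₀ hp.le,
    div_le_iff₀ (sub_pos.2 hα₁), mul_div_assoc', div_mul_eq_mul_div, le_div_iff₀ hp]
  linarith

theorem tsallisBregman_le_of_two_le (hα : 2 ≤ α) (hp : 0 ≤ p) (hq : 0 ≤ q) :
    tsallisBregman α q p ≤ (q - p) * (q ^ (α - 1) - p ^ (α - 1)) := by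
  have hα₀ : α ≠ 0 := by linarith
  have tangent := tangent_le_mul_rpow (β := α - 1) (by linarith) hq hp
  rw [tsallisBregman, rpow_eq_mul_rpow_sub_one hα₀ hq, rpow_eq_mul_rpow_sub_one hα₀ hp,
    div_le_iff₀ (by linarith)]
  linarith

theorem tsallisBregman_le (hα : 1 < α) (hp₀ : 0 < p) (hp₁ : p ≤ 1) (hq : q ∈ Set.Icc 0 1) :
    tsallisBregman α q p ≤ max 1 (α - 1) * ((q - p) ^ 2 / p) := by
  have sq_div_nonneg : 0 ≤ (q - p) ^ 2 / p := by positivity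
  rcases le_total α 2 with hα₂ | hα₂
  · have rpow_le_one : p ^ (α - 1) ≤ 1 := Real.rpow_le_one hp₀.le hp₁ (by linarith)
    exact (tsallisBregman_le_of_le_two hα hα₂ hp₀ hq.1).trans <|
      mul_le_mul_of_nonneg_right (rpow_le_one.trans (le_max_left _ _)) sq_div_nonneg
  · calc tsallisBregman α q p ≤ (q - p) * (q ^ (α - 1) - p ^ (α - 1)) :=
          tsallisBregman_le_of_two_le hα₂ hp₀.le hq.1
      _ ≤ (α - 1) * (q - p) ^ 2 := sub_mul_rpow_sub_rpow_le (by linarith) ⟨hp₀.le, hp₁⟩ hq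
      _ ≤ max 1 (α - 1) * ((q - p) ^ 2 / p) := by
          gcongr
          · exact le_max_right _ _
          · exact le_div_self (sq_nonneg _) hp₀ hp₁

theorem mul_log_sub_log_le (hp : 0 < p) (hq : 0 ≤ q) :
    q * (Real.log q - Real.log p) ≤ (q - p) ^ 2 / p + (q - p) := by
  have factor : (q - p) ^ 2 / p + (q - p) = q * (q / p - 1) := by field_simp; ring
  rw [factor]
  rcases hq.eq_or_lt with rfl | hq
  · simp
  · rw [← Real.log_div hq.ne' hp.ne']
    gcongr
    exact Real.log_le_sub_one_of_pos (div_pos hq hp)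

end Scalar

section ChiSq

variable {κ : Type*} [Fintype κ] {p q : κ → ℝ}

/-- The `χ²`-divergence `χ²(q ‖ p)` of two weight functions on a finite type, the quantity that
controls the excess risk. Division by zero makes the coordinates with `p j = 0` contribute `0`. -/
noncomputable def chiSq (q p : κ → ℝ) : ℝ := ∑ j, (q j - p j) ^ 2 / p j

theorem chiSq_eq_sum_sq_div_sub_one (hp : ∀ j, 0 < p j) (hp_sum : ∑ j, p j = 1)
    (hq_sum : ∑ j, q j = 1) : chiSq q p = ∑ j, q j ^ 2 / p j - 1 := by
  have expand (j : κ) : (q j - p j) ^ 2 / p j = q j ^ 2 / p j - 2 * q j + p j := by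
    have := (hp j).ne'
    field_simp
    ring
  simp only [chiSq, expand, Finset.sum_add_distrib, Finset.sum_sub_distrib, ← Finset.mul_sum,
    hp_sum, hq_sum]
  ring

theorem chiSq_le_of_le_mul {M : ℝ} (hp : ∀ j, 0 < p j) (hp_sum : ∑ j, p j = 1)
    (hq : q ∈ stdSimplex ℝ κ) (hqp : ∀ j, q j ≤ M * p j) : chiSq q p ≤ M - 1 := by
  have sq_div_le (j : κ) : q j ^ 2 / p j ≤ M * q j := by
    rw [div_le_iff₀ (hp j)]
    linarith [mul_le_mul_of_nonneg_left (hqp j) (hq.1 j)]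
  calc chiSq q p = ∑ j, q j ^ 2 / p j - 1 := chiSq_eq_sum_sq_div_sub_one hp hp_sum hq.2
    _ ≤ ∑ j, M * q j - 1 := by gcongr with j; exact sq_div_le j
    _ = M - 1 := by rw [← Finset.mul_sum, hq.2, mul_one]

end ChiSq

section ExcessRisk

variable {d : ℕ} {α : ℝ} {p q : Fin d → ℝ}

theorem sum_mul_tsallisLoss_sub_eq_sum_tsallisBregman (hα : 1 < α) (hp : ∀ j, 0 ≤ p j)
    (hq : q ∈ stdSimplex ℝ (Fin d)) :
    ∑ j, q j * (tsallisLoss α p j - tsallisLoss α q j) =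
      ∑ j, tsallisBregman α (q j) (p j) := by
  have hα₀ : α ≠ 0 := by linarith
  have hα₁ : α - 1 ≠ 0 := by linarith
  have split_power_sums (j : Fin d) : q j * (tsallisLoss α p j - tsallisLoss α q j) =
      (tsallisBregman α (q j) (p j) - (p j ^ α - q j ^ α)) +
        q j * (∑ i, p i ^ α - ∑ i, q i ^ α) := by
    simp only [tsallisLoss, tsallisBregman, if_neg hα.ne', rpow_eq_mul_rpow_sub_one hα₀ (hp j),
      rpow_eq_mul_rpow_sub_one hα₀ (hq.1 j)]
    rw [show 1 - α = -(α - 1) by ring]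
    field_simp
    ring
  simp only [split_power_sums, Finset.sum_add_distrib, Finset.sum_sub_distrib, ← Finset.sum_mul,
    hq.2]
  ring

theorem sum_mul_tsallisLoss_one_sub_le_chiSq (hp : ∀ j, 0 < p j) (hp_sum : ∑ j, p j = 1)
    (hq : q ∈ stdSimplex ℝ (Fin d)) :
    ∑ j, q j * (tsallisLoss 1 p j - tsallisLoss 1 q j) ≤ chiSq q p := by
  calc ∑ j, q j * (tsallisLoss 1 p j - tsallisLoss 1 q j)
      ≤ ∑ j, ((q j - p j) ^ 2 / p j + (q j - p j)) := by
        gcongr with j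
        simpa only [tsallisLoss, if_true, neg_sub_neg] using mul_log_sub_log_le (hp j) (hq.1 j)
    _ = chiSq q p := by
        rw [Finset.sum_add_distrib, Finset.sum_sub_distrib, hp_sum, hq.2, sub_self, add_zero, chiSq]

theorem sum_mul_tsallisLoss_sub_le_chiSq (hα : 1 ≤ α) (hp : ∀ j, 0 < p j)
    (hp_sum : ∑ j, p j = 1) (hq : q ∈ stdSimplex ℝ (Fin d)) :
    ∑ j, q j * (tsallisLoss α p j - tsallisLoss α q j) ≤ max 1 (α - 1) * chiSq q p := by
  rcases hα.eq_or_lt with rfl | hα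
  · simpa using sum_mul_tsallisLoss_one_sub_le_chiSq hp hp_sum hq
  have hp_mem : p ∈ stdSimplex ℝ (Fin d) := ⟨fun j => (hp j).le, hp_sum⟩
  rw [sum_mul_tsallisLoss_sub_eq_sum_tsallisBregman hα hp_mem.1 hq, chiSq, Finset.mul_sum]
  gcongr with j
  exact tsallisBregman_le hα (hp j) (mem_Icc_of_mem_stdSimplex hp_mem j).2
    (mem_Icc_of_mem_stdSimplex hq j)

end ExcessRisk

section SmoothedFreq

variable {ι κ : Type*} [Fintype κ] [DecidableEq κ] {lam : ℝ} {s : Finset ι} {y : ι → κ}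

/-- The frequencies of the outcomes `y i`, `i ∈ s`, after adding the pseudocount `lam` to each
count. The empirical distribution is the case `lam = 0`, and the FTRL point with `η = 1` is the
case `lam = 1`. It is zero, not a distribution, if `lam = 0` and `s` is empty. -/
noncomputable def smoothedFreq (lam : ℝ) (s : Finset ι) (y : ι → κ) (j : κ) : ℝ :=
  ((s.filter (fun i => y i = j)).card + lam) / (s.card + lam * Fintype.card κ)

theorem smoothedFreq_pos (hlam : 0 < lam) (j : κ) : 0 < smoothedFreq lam s y j := by
  have : Nonempty κ := ⟨j⟩
  have : (0 : ℝ) < Fintype.card κ := mod_cast Fintype.card_pos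
  unfold smoothedFreq
  positivity

theorem smoothedFreq_mem_stdSimplex (hlam : 0 ≤ lam) (hs : s.Nonempty) :
    smoothedFreq lam s y ∈ stdSimplex ℝ κ := by
  have : (0 : ℝ) < s.card := mod_cast hs.card_pos
  have sum_counts : ∑ j, ((s.filter (fun i => y i = j)).card : ℝ) = s.card := mod_cast
    (Finset.card_eq_sum_card_fiberwise fun i _ => Finset.mem_coe.2 (Finset.mem_univ (y i))).symm
  refine ⟨fun j => by unfold smoothedFreq; positivity, ?_⟩
  simp only [smoothedFreq]
  rw [← Finset.sum_div, Finset.sum_add_distrib, sum_counts, Finset.sum_const, Finset.card_univ,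
    nsmul_eq_mul, mul_comm lam]
  exact div_self (by positivity)

theorem smoothedFreq_zero_le_mul (hlam : 0 ≤ lam) (hs : s.Nonempty) (j : κ) :
    smoothedFreq 0 s y j ≤ (1 + lam * Fintype.card κ / s.card) * smoothedFreq lam s y j := by
  have : (0 : ℝ) < s.card := mod_cast hs.card_pos
  have mixture : (1 + lam * Fintype.card κ / s.card) * smoothedFreq lam s y j =
      smoothedFreq 0 s y j + lam / s.card := by
    have : (s.card : ℝ) + lam * Fintype.card κ ≠ 0 := by positivity
    simp only [smoothedFreq]
    field_simp
    ring
  rw [mixture]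
  exact le_add_of_nonneg_right (by positivity)

theorem chiSq_smoothedFreq_le (hlam : 0 < lam) (hs : s.Nonempty) :
    chiSq (smoothedFreq 0 s y) (smoothedFreq lam s y) ≤ lam * Fintype.card κ / s.card := by
  simpa only [add_sub_cancel_left] using
    chiSq_le_of_le_mul (smoothedFreq_pos hlam) (smoothedFreq_mem_stdSimplex hlam.le hs).2
      (smoothedFreq_mem_stdSimplex le_rfl hs) (smoothedFreq_zero_le_mul hlam.le hs)

theorem sum_comp_eq_card_mul_sum_smoothedFreq (hs : s.Nonempty) (f : κ → ℝ) :
    ∑ i ∈ s, f (y i) = s.card * ∑ j, smoothedFreq 0 s y j * f j := by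
  have hs_ne : (s.card : ℝ) ≠ 0 := mod_cast hs.card_pos.ne'
  rw [← Finset.sum_fiberwise' s y f, Finset.mul_sum]
  refine Finset.sum_congr rfl fun j _ => ?_
  rw [Finset.sum_const, nsmul_eq_mul, smoothedFreq, zero_mul, add_zero, add_zero]
  field_simp

end SmoothedFreq

theorem stmt11_general {ι : Type*} {d : ℕ} {α lam : ℝ} (hα : 1 ≤ α) (hlam : 0 < lam)
    (s : Finset ι) (y : ι → Fin d) :
    ∑ i ∈ s, (tsallisLoss α (smoothedFreq lam s y) (y i) -
        tsallisLoss α (smoothedFreq 0 s y) (y i)) ≤ max 1 (α - 1) * (lam * d) := by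
  rcases s.eq_empty_or_nonempty with rfl | hs
  · rw [Finset.sum_empty]
    positivity
  have : (0 : ℝ) < s.card := mod_cast hs.card_pos
  set p := smoothedFreq lam s y
  set q := smoothedFreq 0 s y
  calc ∑ i ∈ s, (tsallisLoss α p (y i) - tsallisLoss α q (y i))
      = s.card * ∑ j, q j * (tsallisLoss α p j - tsallisLoss α q j) :=
        sum_comp_eq_card_mul_sum_smoothedFreq hs fun j => tsallisLoss α p j - tsallisLoss α q j
    _ ≤ s.card * (max 1 (α - 1) * chiSq q p) := by
        gcongr
        exact sum_mul_tsallisLoss_sub_le_chiSq hα (smoothedFreq_pos hlam)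
          (smoothedFreq_mem_stdSimplex hlam.le hs).2 (smoothedFreq_mem_stdSimplex le_rfl hs)
    _ ≤ s.card * (max 1 (α - 1) * (lam * d / s.card)) := by
        gcongr
        simpa only [Fintype.card_fin] using chiSq_smoothedFreq_le (y := y) hlam hs
    _ = max 1 (α - 1) * (lam * d) := by field_simp

/-- Lemma `smoothing-term-tsallis-loss`: with `η = 1`, the smoothing term satisfies
`∑_{t=1}^T (ℓ_α(p_{T+1}, y_t) − ℓ_α(p̄_T, y_t)) ≤ 3αd`. Rounds are 1-based: `y s` is
the outcome of round `s+1`. -/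
theorem stmt11 {d T : ℕ} (α : ℝ) (hd : 1 ≤ d) (hα1 : 1 ≤ α) (hα2 : α ≤ 2)
    (y : ℕ → Fin d) (pT1 pbar : Fin d → ℝ)
    (hpT1 : ∀ j : Fin d,
        pT1 j = ((((Finset.range T).filter (fun s => y s = j)).card : ℝ) + 1) / ((T : ℝ) + d))
    (hpbar : ∀ j : Fin d,
        pbar j = (((Finset.range T).filter (fun s => y s = j)).card : ℝ) / (T : ℝ)) :
    ∑ s ∈ Finset.range T, (tsallisLoss α pT1 (y s) - tsallisLoss α pbar (y s))
      ≤ 3 * α * d := by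
  obtain rfl : pT1 = smoothedFreq 1 (Finset.range T) y :=
    funext fun j => by simp [smoothedFreq, hpT1]
  obtain rfl : pbar = smoothedFreq 0 (Finset.range T) y :=
    funext fun j => by simp [smoothedFreq, hpbar]
  calc _ ≤ max 1 (α - 1) * (1 * d) := stmt11_general hα1 one_pos (Finset.range T) y
    _ ≤ 3 * α * d := by
        rw [one_mul]
        gcongr
        exact max_le (by linarith) (by linarith)
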